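/- arXiv:0705.1286 — 2 statements merged into one kernel-verified Lean document; each statement's English description precedes it below -/
import Mathlib

section
/- Let R be an integral domain and M a maximal ideal of R[X], and set P = M ∩ R. Then M is power stable if and only if for every t ≥ 1 the ideal P^t is P-primary (i.e. P^t is a primary ideal with radical equal to P). -/
open Polynomial

/-- An ideal `I` of `R[X]` is power stable if for all `t ≥ 1`,
`I^t ∩ R = (I ∩ R)^t`, intersections with `R` meaning contraction along `C : R →+* R[X]`. -/
def IsPowerStable {R : Type*} [CommRing R] (I : Ideal R[X]) : Prop :=
  ∀ t : ℕ, 1 ≤ t →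
    (I ^ t).comap (C : R →+* R[X]) = (I.comap (C : R →+* R[X])) ^ t

theorem aux_sup {A : Type*} [CommRing A] (I J S : Ideal A) :
    (I ⊔ S) * (J ⊔ S) ≤ I * J ⊔ S := by
  rw [Ideal.sup_mul, Ideal.mul_sup]
  have h1 : I * S ≤ S := Ideal.mul_le.2 fun r _ s hs => S.mul_mem_left r hs
  have h2 : S * (J ⊔ S) ≤ S := Ideal.mul_le.2 fun r hr s _ => S.mul_mem_right s hr
  exact sup_le (sup_le le_sup_left (h1.trans le_sup_right)) (h2.trans le_sup_right)

theorem aux_ex {R : Type*} [CommRing R] (M : Ideal R[X])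
    (hM : M.IsMaximal) (P : Ideal R) (hP : P = M.comap (C : R →+* R[X])) :
    ∃ f ∈ M, f ∉ P.map (C : R →+* R[X]) := by
  by_contra hcon
  push Not at hcon
  have h1 : (1 : R) ∉ P := by
    rw [hP, Ideal.mem_comap, map_one]
    exact fun h => hM.ne_top ((Ideal.eq_top_iff_one _).2 h)
  by_cases hX : (X : R[X]) ∈ M
  · have := Ideal.mem_map_C_iff.1 (hcon _ hX) 1
    simp at this
    exact h1 this
  · obtain ⟨y, i, hi, h⟩ := hM.exists_inv hX
    have h2 := Ideal.mem_map_C_iff.1 (hcon _ hi) 0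
    have h3 := congrArg (fun p => coeff p 0) h
    simp at h3
    rw [h3] at h2
    exact h1 h2

theorem aux_min {R : Type*} [CommRing R] (M : Ideal R[X])
    (hM : M.IsMaximal) (P : Ideal R) (hP : P = M.comap (C : R →+* R[X])) :
    ∃ f ∈ M, f.leadingCoeff ∉ P ∧ 0 < f.natDegree ∧
      ∀ g ∈ M, g.natDegree < f.natDegree → g ∈ P.map (C : R →+* R[X]) := by
  classical
  have hPM : P.map (C : R →+* R[X]) ≤ M := Ideal.map_le_iff_le_comap.2 hP.le
  have hex : ∃ n, ∃ f ∈ M, f ∉ P.map (C : R →+* R[X]) ∧ f.natDegree = n := by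
    obtain ⟨f, h, h'⟩ := aux_ex M hM P hP
    exact ⟨_, f, h, h', rfl⟩
  obtain ⟨f, hf, hfP, hn⟩ := Nat.find_spec hex
  have hmin : ∀ g ∈ M, g.natDegree < f.natDegree → g ∈ P.map (C : R →+* R[X]) := by
    intro g hg hlt
    by_contra hgP
    rw [hn] at hlt
    exact Nat.find_min hex hlt ⟨g, hg, hgP, rfl⟩
  have hpos : 0 < f.natDegree := by
    by_contra h0
    have h0 : f.natDegree = 0 := by omega
    rw [eq_C_of_natDegree_eq_zero h0] at hf hfP
    apply hfP
    apply Ideal.mem_map_of_mem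
    rw [hP]; exact hf
  refine ⟨f, hf, ?_, hpos, hmin⟩
  intro hlc
  have hm : C f.leadingCoeff * X ^ f.natDegree ∈ P.map (C : R →+* R[X]) :=
    Ideal.mul_mem_right _ _ (Ideal.mem_map_of_mem _ hlc)
  have he : f.eraseLead = f - C f.leadingCoeff * X ^ f.natDegree :=
    (self_sub_C_mul_X_pow f).symm
  have h1 : f.eraseLead ∈ M := by rw [he]; exact M.sub_mem hf (hPM hm)
  have h2 : f.eraseLead ∈ P.map (C : R →+* R[X]) := by
    apply hmin _ h1
    have := eraseLead_natDegree_le f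
    omega
  apply hfP
  rw [← eraseLead_add_C_mul_X_pow f]
  exact Ideal.add_mem _ h2 hm

theorem aux_div {R : Type*} [CommRing R] (M : Ideal R[X])
    (P : Ideal R) [P.IsPrime] (f : R[X]) (hf : f ∈ M)
    (hlc : f.leadingCoeff ∉ P) (hpos : 0 < f.natDegree)
    (hmin : ∀ g ∈ M, g.natDegree < f.natDegree → g ∈ P.map (C : R →+* R[X])) :
    ∀ n : ℕ, ∀ g ∈ M, g.natDegree = n →
      ∃ s ∉ P, C s * g ∈ P.map (C : R →+* R[X]) ⊔ Ideal.span {f} := by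
  intro n
  induction n using Nat.strong_induction_on with
  | _ n ih =>
    intro g hg hn
    by_cases hlt : g.natDegree < f.natDegree
    · refine ⟨1, fun h => Ideal.IsPrime.ne_top ‹_› ((Ideal.eq_top_iff_one _).2 h), ?_⟩
      rw [map_one, one_mul]
      exact Ideal.mem_sup_left (hmin g hg hlt)
    · push Not at hlt
      have hd := natDegree_cancelLeads_lt_of_natDegree_le_natDegree hlt (by omega)
      have hmem : f.cancelLeads g ∈ M :=
        M.sub_mem (M.mul_mem_left _ hg) (M.mul_mem_left _ hf)
      obtain ⟨s, hs, h⟩ := ih _ (by omega) _ hmem rfl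
      refine ⟨s * f.leadingCoeff, fun h => (Ideal.IsPrime.mem_or_mem ‹_› h).elim hs hlc, ?_⟩
      have hff : f ∈ P.map (C : R →+* R[X]) ⊔ Ideal.span {f} :=
        Ideal.mem_sup_right (Ideal.mem_span_singleton_self f)
      have := Ideal.add_mem _ h
        (Ideal.mul_mem_left _ (C s * (C g.leadingCoeff * X ^ (g.natDegree - f.natDegree))) hff)
      convert this using 1
      simp only [cancelLeads, Nat.sub_eq_zero_of_le hlt, map_mul]
      ring

theorem aux_pow {R : Type*} [CommRing R] (M : Ideal R[X])
    (P : Ideal R) [P.IsPrime] (f : R[X])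
    (h1 : ∀ g ∈ M, ∃ s ∉ P, C s * g ∈ P.map (C : R →+* R[X]) ⊔ Ideal.span {f}) (t : ℕ) :
    ∀ g ∈ M ^ t, ∃ s ∉ P, C s * g ∈ (P ^ t).map (C : R →+* R[X]) ⊔ Ideal.span {f} := by
  induction t with
  | zero =>
    intro g _
    refine ⟨1, fun h => Ideal.IsPrime.ne_top ‹_› ((Ideal.eq_top_iff_one _).2 h), ?_⟩
    simp [Ideal.one_eq_top, Ideal.map_top]
  | succ t ih =>
    intro g hg
    rw [pow_succ] at hg
    refine Submodule.mul_induction_on hg ?_ ?_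
    · intro m hm n hn
      obtain ⟨s, hs, h⟩ := ih m hm
      obtain ⟨s', hs', h'⟩ := h1 n hn
      refine ⟨s * s', fun h => (Ideal.IsPrime.mem_or_mem ‹_› h).elim hs hs', ?_⟩
      have := Ideal.mul_mem_mul h h'
      have hle : ((P ^ t).map (C : R →+* R[X]) ⊔ Ideal.span {f}) *
          (P.map (C : R →+* R[X]) ⊔ Ideal.span {f}) ≤
          (P ^ (t+1)).map (C : R →+* R[X]) ⊔ Ideal.span {f} := by
        rw [pow_succ, Ideal.map_mul]
        exact aux_sup _ _ _
      convert hle this using 1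
      rw [map_mul]; ring
    · rintro x y ⟨s, hs, h⟩ ⟨s', hs', h'⟩
      refine ⟨s * s', fun h => (Ideal.IsPrime.mem_or_mem ‹_› h).elim hs hs', ?_⟩
      have := Ideal.add_mem _ (Ideal.mul_mem_left _ (C s') h) (Ideal.mul_mem_left _ (C s) h')
      convert this using 1
      rw [map_mul]; ring

theorem aux_last {R : Type*} [CommRing R] (P Q : Ideal R) (hQ : Q.IsPrimary)
    (hr : Q.radical = P) (f : R[X]) (hlc : f.leadingCoeff ∉ P) (hpos : 0 < f.natDegree)
    (a : R) (h : C a ∈ Q.map (C : R →+* R[X]) ⊔ Ideal.span {f}) : a ∈ Q := by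
  have hprim : ∀ x : R, f.leadingCoeff * x ∈ Q → x ∈ Q := by
    intro x hx
    rw [mul_comm] at hx
    rcases (Ideal.isPrimary_iff.1 hQ).2 hx with h | h
    · exact h
    · rw [hr] at h; exact absurd h hlc
  obtain ⟨u, hu, v, hv, huv⟩ := Submodule.mem_sup.1 h
  obtain ⟨k, rfl⟩ := Ideal.mem_span_singleton'.1 hv
  set φ := Ideal.Quotient.mk Q with hφ
  have hu0 : u.map φ = 0 := by
    ext n
    rw [coeff_map, coeff_zero]
    exact Ideal.Quotient.eq_zero_iff_mem.2 (Ideal.mem_map_C_iff.1 hu n)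
  have heq : k.map φ * f.map φ = C (φ a) := by
    have := congrArg (Polynomial.map φ) huv
    simpa [hu0] using this
  have hk : k.map φ = 0 := by
    by_contra hk
    have hQt : φ f.leadingCoeff ≠ 0 := by
      intro h0
      exact hlc (hr ▸ Ideal.le_radical (Ideal.Quotient.eq_zero_iff_mem.1 h0))
    have hl : (f.map φ).leadingCoeff = φ f.leadingCoeff := leadingCoeff_map_of_leadingCoeff_ne_zero φ hQt
    have hd : (f.map φ).natDegree = f.natDegree := natDegree_map_of_leadingCoeff_ne_zero φ hQt
    have hne : (k.map φ).leadingCoeff * (f.map φ).leadingCoeff ≠ 0 := by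
      intro h0
      obtain ⟨b, hb⟩ := Ideal.Quotient.mk_surjective (k.map φ).leadingCoeff
      rw [hl, ← hb, ← map_mul, Ideal.Quotient.eq_zero_iff_mem, mul_comm] at h0
      have := Ideal.Quotient.eq_zero_iff_mem.2 (hprim b h0)
      rw [hb] at this
      exact hk (leadingCoeff_eq_zero.1 this)
    have := natDegree_mul' hne
    rw [heq, natDegree_C] at this
    omega
  rw [hk, zero_mul] at heq
  exact Ideal.Quotient.eq_zero_iff_mem.1 (C_eq_zero.1 heq.symm)

theorem stmt_8 {R : Type*} [CommRing R] [IsDomain R] (M : Ideal R[X])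
    (hM : M.IsMaximal) (P : Ideal R) (hP : P = M.comap (C : R →+* R[X])) :
    IsPowerStable M ↔
      ∀ t : ℕ, 1 ≤ t → (P ^ t).IsPrimary ∧ (P ^ t).radical = P := by
  have hPp : P.IsPrime := by
    rw [hP]; exact Ideal.comap_isPrime _ _
  have hPM : P.map (C : R →+* R[X]) ≤ M := Ideal.map_le_iff_le_comap.2 hP.le
  constructor
  · intro h t ht
    have hrad : (P ^ t).radical = P := by
      rw [Ideal.radical_pow _ (by omega), hPp.radical]
    refine ⟨?_, hrad⟩
    have hMt : (M ^ t).IsPrimary := by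
      apply Ideal.isPrimary_of_isMaximal_radical
      rw [Ideal.radical_pow _ (by omega), hM.isPrime.radical]
      exact hM
    rw [hP, ← h t ht]
    exact hMt.comap _
  · intro h t ht
    rw [← hP]
    apply le_antisymm
    · intro a ha
      obtain ⟨f, hf, hlc, hpos, hmin⟩ := aux_min M hM P hP
      obtain ⟨s, hs, hsa⟩ := aux_pow M P f
        (fun g hg => aux_div M P f hf hlc hpos hmin _ g hg rfl) t _ (Ideal.mem_comap.1 ha)
      rw [← map_mul] at hsa
      obtain ⟨hprim, hrad⟩ := h t ht
      have := aux_last P (P ^ t) hprim hrad f hlc hpos _ hsa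
      rw [mul_comm] at this
      rcases (Ideal.isPrimary_iff.1 hprim).2 this with h | h
      · exact h
      · rw [hrad] at h; exact absurd h hs
    · rw [← Ideal.map_le_iff_le_comap, Ideal.map_pow]
      exact Ideal.pow_right_mono hPM t
end

section
/- Let K be a field and n ≥ 1. Then every maximal ideal of the polynomial ring K[X₁, …, Xₙ] in n variables, regarded as an ideal of (K[X₁, …, X_{n-1}])[Xₙ], is power stable over the integral domain R = K[X₁, …, X_{n-1}]; that is, for every maximal ideal M of R[X] and all t ≥ 1, M^t ∩ R = (M ∩ R)^t. -/
open Polynomial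

lemma sup_pow_le_aux {A : Type*} [CommRing A] (I J : Ideal A) (t : ℕ) :
    (I ⊔ J) ^ t ≤ I ^ t ⊔ J := by
  induction t with
  | zero => simp
  | succ t ih =>
    rw [pow_succ, pow_succ]
    refine (Ideal.mul_mono_left ih).trans ?_
    rw [Ideal.sup_mul, Ideal.mul_sup]
    refine sup_le (sup_le le_sup_left (Ideal.mul_le_right.trans le_sup_right))
      (Ideal.mul_le_left.trans le_sup_right)

lemma stable_aux {R : Type*} [CommRing R] (m : Ideal R) (f : R[X]) (hf : f.Monic)
    (hd : f.natDegree ≠ 0) (r : R) (h : C r ∈ m.map (C : R →+* R[X]) ⊔ Ideal.span {f}) :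
    r ∈ m := by
  obtain ⟨a, ha, b, hb, hab⟩ := Submodule.mem_sup.1 h
  obtain ⟨c, rfl⟩ := Ideal.mem_span_singleton'.1 hb
  by_contra hr
  have : Nontrivial (R ⧸ m) := Ideal.Quotient.nontrivial_iff.2 (by rintro rfl; simp at hr)
  have ha0 : a.map (Ideal.Quotient.mk m) = 0 := by
    ext i
    simpa [Ideal.Quotient.eq_zero_iff_mem] using Ideal.mem_map_C_iff.1 ha i
  have h1 := congrArg (Polynomial.map (Ideal.Quotient.mk m)) hab
  simp only [Polynomial.map_add, ha0, Polynomial.map_mul, zero_add, map_C] at h1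
  have hfm := hf.map (Ideal.Quotient.mk m)
  by_cases hc : c.map (Ideal.Quotient.mk m) = 0
  · rw [hc, zero_mul] at h1
    exact hr (Ideal.Quotient.eq_zero_iff_mem.1 (C_eq_zero.1 h1.symm))
  · have h2 := congrArg natDegree h1
    rw [mul_comm, hfm.natDegree_mul' hc, natDegree_C, hf.natDegree_map] at h2
    omega

lemma exists_aux {R : Type*} [CommRing R] [IsJacobsonRing R] (M : Ideal R[X])
    (hM : M.IsMaximal) : ∃ f : R[X], f.Monic ∧ f.natDegree ≠ 0 ∧
      M ≤ (M.comap (C : R →+* R[X])).map C ⊔ Ideal.span {f} := by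
  have hm : (M.comap (C : R →+* R[X])).IsMaximal :=
    Polynomial.isMaximal_comap_C_of_isJacobsonRing M
  set m := M.comap (C : R →+* R[X]) with hmdef
  let _ : Field (R ⧸ m) := Ideal.Quotient.field m
  let φ : R[X] →+* (R ⧸ m)[X] := mapRingHom (Ideal.Quotient.mk m)
  have hφ : Function.Surjective φ := map_surjective _ Ideal.Quotient.mk_surjective
  have hker : RingHom.ker φ ≤ m.map C := by
    intro p hp
    rw [Ideal.mem_map_C_iff]
    intro i
    have := congrArg (fun q => coeff q i) ((RingHom.mem_ker).1 hp)
    simpa [φ, Ideal.Quotient.eq_zero_iff_mem] using this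
  have hmM : m.map C ≤ M := Ideal.map_comap_le
  have hmax : (M.map φ).IsMaximal :=
    Ideal.IsMaximal.map_of_surjective_of_ker_le hφ (hker.trans hmM)
  have hne : M.map φ ≠ ⊥ := fun h => by
    rw [h] at hmax
    exact Polynomial.not_isField (R ⧸ m) (Ring.isField_iff_maximal_bot.2 hmax)
  obtain ⟨g0, hg0⟩ := (IsPrincipalIdealRing.principal (M.map φ)).principal
  have hg00 : g0 ≠ 0 := by
    rintro rfl; apply hne; rw [hg0]; simp
  obtain ⟨g, hg, hspan⟩ : ∃ g : (R ⧸ m)[X], g.Monic ∧ M.map φ = Ideal.span {g} := by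
    refine ⟨g0 * C (g0.leadingCoeff)⁻¹, monic_mul_leadingCoeff_inv hg00, ?_⟩
    rw [hg0, Ideal.span_singleton_mul_right_unit]
    exact (isUnit_C).2 (IsUnit.mk0 _ (inv_ne_zero (leadingCoeff_ne_zero.2 hg00)))
  obtain ⟨f, hfg, hfd, hf⟩ := lifts_and_natDegree_eq_and_monic (f := Ideal.Quotient.mk m)
    (p := g) ((mem_lifts _).2 (hφ g)) hg
  refine ⟨f, hf, ?_, ?_⟩
  · rw [hfd]
    intro h0
    have := hg.natDegree_eq_zero.1 h0
    rw [this] at hspan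
    exact hmax.ne_top (by rw [hspan]; simp)
  · intro p hp
    have hp' : φ p ∈ Ideal.span {g} := hspan ▸ Ideal.mem_map_of_mem φ hp
    obtain ⟨c, hc⟩ := Ideal.mem_span_singleton'.1 hp'
    obtain ⟨c, rfl⟩ := hφ c
    have hk : p - c * f ∈ RingHom.ker φ := by
      rw [RingHom.mem_ker, map_sub, map_mul, ← hc, ← hfg]
      simp [φ]
    refine Submodule.mem_sup.2 ⟨_, hker hk, c * f, Ideal.mem_span_singleton'.2 ⟨c, rfl⟩, by ring⟩

theorem stmt_11 (K : Type*) [Field K] (n : ℕ) (hn : 1 ≤ n)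
    (M : Ideal (MvPolynomial (Fin (n - 1)) K)[X]) (hM : M.IsMaximal) :
    IsPowerStable M := by
  intro t _
  obtain ⟨f, hf, hd, hle⟩ := exists_aux M hM
  apply le_antisymm
  · intro r hr
    refine stable_aux _ f hf hd r ?_
    rw [Ideal.map_pow]
    exact sup_pow_le_aux _ _ t (Ideal.pow_right_mono hle t hr)
  · exact Ideal.le_comap_pow _ t
end
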